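/- (Error analysis of PowerBlast.) Let K ≥ 1 and D ≥ 2 be integers, P > 0, σ > 0 and S = P/σ². Set p = 2(1 − 2^{−K})·Q(√(3·S·(1 + S)^{D−2}/(2^{2K} − 1))) (the error probability of the first D − 1 rounds), and assume 0 < p < 1. Define γ = 1/(2√p) + (√p/S)·ln(2(1 − p)/p) and assume γ ≥ 0. Model the final round as follows: U is a random variable with P(U = 0) = 1 − p and P(U = 1) = P(U = −1) = p/2, N ~ N(0, σ²) is independent of U, Y = √(P/p)·U + N (unit-power normalization, since E[U²] = p), and Û is the threshold decoder with threshold t = γ·√P (i.e., Û = 0 if |Y| ≤ γ√P and Û = sign(Y) otherwise). Then: (i) t = γ√P coincides with the MAP boundary A/2 + (σ²/A)·ln(2(1 − p)/p) for amplitude A = √(P/p); and (ii) the overall error probability of the final round is P(Û ≠ U) = 2(1 − p)·Q(γ·√S) + p·Q((1/√p − γ)·√S). -/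

import Mathlib

open MeasureTheory ProbabilityTheory
open scoped ENNReal NNReal

/-- The Gaussian Q-function: `Q(x) = ∫_x^∞ (1/√(2π)) e^{-u²/2} du`. -/
noncomputable def gaussQ (x : ℝ) : ℝ :=
  ∫ u in Set.Ioi x, (1 / Real.sqrt (2 * Real.pi)) * Real.exp (-(u ^ 2) / 2)

lemma gaussQ_nonneg (x : ℝ) : 0 ≤ gaussQ x := by
  unfold gaussQ
  exact integral_nonneg fun u => by positivity

lemma std_Ioi (x : ℝ) : gaussianReal 0 1 (Set.Ioi x) = ENNReal.ofReal (gaussQ x) := by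
  rw [gaussianReal_apply_eq_integral 0 one_ne_zero]
  congr 1
  unfold gaussQ
  refine integral_congr_ae (Filter.Eventually.of_forall fun u => ?_)
  simp [gaussianPDFReal]

lemma gauss_Ioi (σ : ℝ) (hσ : 0 < σ) (x : ℝ) :
    gaussianReal 0 ⟨σ ^ 2, sq_nonneg σ⟩ (Set.Ioi x) = ENNReal.ofReal (gaussQ (x / σ)) := by
  have h := gaussianReal_map_const_mul (μ := 0) (v := 1) σ
  rw [mul_zero, mul_one] at h
  rw [← std_Ioi]
  refine (congrArg (fun m : Measure ℝ => m (Set.Ioi x)) h.symm).trans ?_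
  rw [Measure.map_apply (by fun_prop) measurableSet_Ioi]
  congr 1
  ext u
  simp [div_lt_iff₀' hσ]

lemma gauss_Iio (σ : ℝ) (hσ : 0 < σ) (x : ℝ) :
    gaussianReal 0 ⟨σ ^ 2, sq_nonneg σ⟩ (Set.Iio x) = ENNReal.ofReal (gaussQ (-x / σ)) := by
  rw [← gauss_Ioi σ hσ]
  have h := gaussianReal_map_neg (μ := 0) (v := ⟨σ ^ 2, sq_nonneg σ⟩)
  rw [neg_zero] at h
  conv_lhs => rw [← h]
  rw [Measure.map_apply (by fun_prop) measurableSet_Iio]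
  congr 1
  ext u
  simp [neg_lt]

lemma gauss_noAtoms (σ : ℝ) (hσ : 0 < σ) :
    NullSingletonClass (gaussianReal 0 ⟨σ ^ 2, sq_nonneg σ⟩) := by
  apply nullSingletonClass_gaussianReal
  intro h
  have h2 : σ ^ 2 = 0 := congrArg NNReal.toReal h
  exact absurd h2 (by positivity)

lemma gauss_Iic (σ : ℝ) (hσ : 0 < σ) (x : ℝ) :
    gaussianReal 0 ⟨σ ^ 2, sq_nonneg σ⟩ (Set.Iic x) = ENNReal.ofReal (gaussQ (-x / σ)) := by
  have := gauss_noAtoms σ hσ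
  rw [← gauss_Iio σ hσ, measure_congr Iio_ae_eq_Iic]

lemma gauss_Ici (σ : ℝ) (hσ : 0 < σ) (x : ℝ) :
    gaussianReal 0 ⟨σ ^ 2, sq_nonneg σ⟩ (Set.Ici x) = ENNReal.ofReal (gaussQ (x / σ)) := by
  have := gauss_noAtoms σ hσ
  rw [← gauss_Ioi σ hσ, measure_congr Ioi_ae_eq_Ici]

/-- Error analysis of the final round of PowerBlast. With
`p = 2(1 - 2^{-K})·Q(√(3·S·(1+S)^(D-2)/(2^(2K)-1)))` (error probability of the first
`D-1` rounds), `0 < p < 1`, `γ = 1/(2√p) + (√p/S)·ln(2(1-p)/p) ≥ 0`, the final round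
modeled as `Y = √(P/p)·U + N` with `U ∈ {-1, 0, 1}` distributed `{p/2, 1-p, p/2}`,
`N ~ N(0,σ²)` independent of `U`, and threshold decoder with threshold `t = γ√P`:
(i) `γ√P` coincides with the MAP boundary `A/2 + (σ²/A)·ln(2(1-p)/p)` for `A = √(P/p)`;
(ii) `P(Û ≠ U) = 2(1-p)·Q(γ·√S) + p·Q((1/√p - γ)·√S)`, with `S = P/σ²`. -/
theorem powerblast_final_round_error (K D : ℕ) (hK : 1 ≤ K) (hD : 2 ≤ D)
    {Ω : Type*} [MeasurableSpace Ω] (μ : Measure Ω) [IsProbabilityMeasure μ]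
    (P σ : ℝ) (hP : 0 < P) (hσ : 0 < σ)
    (p γ : ℝ)
    (hpdef : p = 2 * (1 - (2 : ℝ)⁻¹ ^ K) *
      gaussQ (Real.sqrt (3 * (P / σ ^ 2) * (1 + P / σ ^ 2) ^ (D - 2) / (2 ^ (2 * K) - 1))))
    (hp0 : 0 < p) (hp1 : p < 1)
    (hγdef : γ = 1 / (2 * Real.sqrt p) +
      Real.sqrt p / (P / σ ^ 2) * Real.log (2 * (1 - p) / p))
    (hγ : 0 ≤ γ)
    (U N : Ω → ℝ) (hUm : Measurable U) (hNm : Measurable N)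
    (hU0 : μ (U ⁻¹' {0}) = ENNReal.ofReal (1 - p))
    (hU1 : μ (U ⁻¹' {1}) = ENNReal.ofReal (p / 2))
    (hUneg : μ (U ⁻¹' {-1}) = ENNReal.ofReal (p / 2))
    (hindep : IndepFun U N μ)
    (hN : μ.map N = gaussianReal 0 ⟨σ ^ 2, sq_nonneg σ⟩)
    (Y Uhat : Ω → ℝ)
    (hY : Y = fun ω => Real.sqrt (P / p) * U ω + N ω)
    (hUhat : Uhat = fun ω =>
      if |Y ω| ≤ γ * Real.sqrt P then 0 else if Y ω > γ * Real.sqrt P then 1 else -1) :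
    γ * Real.sqrt P =
        Real.sqrt (P / p) / 2 +
          σ ^ 2 / Real.sqrt (P / p) * Real.log (2 * (1 - p) / p) ∧
      μ {ω | Uhat ω ≠ U ω} =
        ENNReal.ofReal (2 * (1 - p) * gaussQ (γ * Real.sqrt (P / σ ^ 2)) +
          p * gaussQ ((1 / Real.sqrt p - γ) * Real.sqrt (P / σ ^ 2))) := by
  have hsp : 0 < √p := Real.sqrt_pos.2 hp0
  have hsP : 0 < √P := Real.sqrt_pos.2 hP
  have hpp : √p ^ 2 = p := Real.sq_sqrt hp0.le
  have hPP : √P ^ 2 = P := Real.sq_sqrt hP.le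
  have hA : √(P / p) = √P / √p := Real.sqrt_div hP.le p
  have hS : √(P / σ ^ 2) = √P / σ := by
    rw [Real.sqrt_div hP.le, Real.sqrt_sq hσ.le]
  refine ⟨?_, ?_⟩
  · rw [hA, hγdef]
    generalize Real.log (2 * (1 - p) / p) = L
    have : P / σ ^ 2 = √P ^ 2 / σ ^ 2 := by rw [hPP]
    rw [this]
    field_simp
  have ht0 : 0 ≤ γ * √P := by positivity
  have e1 : γ * √(P / σ ^ 2) = (γ * √P) / σ := by rw [hS]; ring
  have e2 : (1 / √p - γ) * √(P / σ ^ 2) = (√(P / p) - γ * √P) / σ := by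
    rw [hS, hA]; field_simp
  rw [e1, e2]
  generalize γ * √P = t at *
  generalize √(P / p) = A at *
  have hjoint : ∀ (u : ℝ) (s : Set ℝ), MeasurableSet s →
      μ (U ⁻¹' {u} ∩ N ⁻¹' s) =
        μ (U ⁻¹' {u}) * gaussianReal 0 ⟨σ ^ 2, sq_nonneg σ⟩ s := by
    intro u s hs
    rw [hindep.measure_inter_preimage_eq_mul _ _ (measurableSet_singleton u) hs, ← hN,
      Measure.map_apply hNm hs]
  have m0 : MeasurableSet (U ⁻¹' {0}) := hUm (measurableSet_singleton _)
  have m1 : MeasurableSet (U ⁻¹' {1}) := hUm (measurableSet_singleton _)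
  have mn : MeasurableSet (U ⁻¹' {-1}) := hUm (measurableSet_singleton _)
  have d1 : Disjoint (U ⁻¹' {0}) (U ⁻¹' {1}) :=
    Disjoint.preimage _ (by simp)
  have d2 : Disjoint (U ⁻¹' {0} ∪ U ⁻¹' {1}) (U ⁻¹' {-1}) := by
    rw [← Set.preimage_union]
    refine Disjoint.preimage _ ?_
    rw [Set.disjoint_singleton_right]
    norm_num
  have hfull : μ (U ⁻¹' {0} ∪ U ⁻¹' {1} ∪ U ⁻¹' {-1}) = 1 := by
    rw [measure_union d2 mn, measure_union d1 m1, hU0, hU1, hUneg,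
      ← ENNReal.ofReal_add (by linarith) (by linarith),
      ← ENNReal.ofReal_add (by linarith) (by linarith), ← ENNReal.ofReal_one]
    congr 1
    ring
  have hae : ∀ᵐ ω ∂μ, ω ∈ U ⁻¹' {0} ∪ U ⁻¹' {1} ∪ U ⁻¹' {-1} :=
    (prob_compl_eq_zero_iff ((m0.union m1).union mn)).2 hfull
  set E0 := U ⁻¹' {0} ∩ N ⁻¹' (Set.Ioi t ∪ Set.Iio (-t)) with hE0
  set E1 := U ⁻¹' {1} ∩ N ⁻¹' (Set.Iic (t - A)) with hE1
  set En := U ⁻¹' {-1} ∩ N ⁻¹' (Set.Ici (A - t)) with hEn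
  have hset : μ {ω | Uhat ω ≠ U ω} = μ (E0 ∪ E1 ∪ En) := by
    apply measure_congr
    filter_upwards [hae] with ω hω
    apply propext
    change Uhat ω ≠ U ω ↔ ω ∈ E0 ∪ E1 ∪ En
    simp only [hE0, hE1, hEn, Set.mem_union, Set.mem_inter_iff, Set.mem_preimage,
      Set.mem_singleton_iff, Set.mem_Ioi, Set.mem_Iio, Set.mem_Iic, Set.mem_Ici] at hω ⊢
    rw [hUhat]
    simp only [hY, abs_le]
    rcases hω with (h | h) | h <;> rw [h] <;> norm_num <;> split_ifs <;> grind
  have mE1 : MeasurableSet E1 := m1.inter (hNm measurableSet_Iic)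
  have mEn : MeasurableSet En := mn.inter (hNm measurableSet_Ici)
  have D1 : Disjoint E0 E1 := d1.mono Set.inter_subset_left Set.inter_subset_left
  have D2 : Disjoint (E0 ∪ E1) En :=
    d2.mono (Set.union_subset_union Set.inter_subset_left Set.inter_subset_left)
      Set.inter_subset_left
  have dd : Disjoint (Set.Ioi t) (Set.Iio (-t)) := by
    rw [Set.disjoint_left]
    intro x hx hx'
    simp only [Set.mem_Ioi, Set.mem_Iio] at hx hx'
    linarith
  have q1 := gaussQ_nonneg (t / σ)
  have q2 := gaussQ_nonneg ((A - t) / σ)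
  rw [hset, measure_union D2 mEn, measure_union D1 mE1,
    hjoint _ _ (measurableSet_Ioi.union measurableSet_Iio), hjoint _ _ measurableSet_Iic,
    hjoint _ _ measurableSet_Ici, measure_union dd measurableSet_Iio, gauss_Ioi σ hσ,
    gauss_Iio σ hσ, gauss_Iic σ hσ, gauss_Ici σ hσ, hU0, hU1, hUneg, neg_neg, neg_sub,
    ← ENNReal.ofReal_add q1 q1, ← ENNReal.ofReal_mul (by linarith),
    ← ENNReal.ofReal_mul (by linarith), 
    ← ENNReal.ofReal_add (mul_nonneg (by linarith) (by linarith))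
      (mul_nonneg (by linarith) q2),
    ← ENNReal.ofReal_add (add_nonneg (mul_nonneg (by linarith) (by linarith))
      (mul_nonneg (by linarith) q2)) (mul_nonneg (by linarith) q2)]
  congr 1
  ring
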